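/- Let S be a reduced commutative semigroup with zero and suppose Γ(S) is a complete r-partite graph with parts V₁, V₂, …, V_r. Then for every t with 1 ≤ t ≤ r, the set V_t ∪ {0} is an ideal of S and p_t = Z(S) \ V_t is a prime ideal of S. -/

import Mathlib

/-- A commutative semigroup with a zero element. -/
class CommSemigroupWithZero (S : Type*) extends SemigroupWithZero S where
  mul_comm : ∀ a b : S, a * b = b * a

variable (S : Type*) [CommSemigroupWithZero S]

/-- The set of zero-divisors of `S`. -/
def zdivs : Set S := {x | ∃ y, y ≠ 0 ∧ x * y = 0}

/-- The vertex set `Z(S)* = Z(S) \ {0}` of the zero-divisor graph. -/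
def zdVerts : Set S := {x | x ≠ 0 ∧ x ∈ zdivs S}

/-- The zero-divisor graph `Γ(S)`. -/
def zdGraph : SimpleGraph (zdVerts S) where
  Adj x y := x ≠ y ∧ (x : S) * y = 0
  symm := by
    constructor
    rintro x y ⟨hne, h⟩
    exact ⟨hne.symm, by rw [CommSemigroupWithZero.mul_comm]; exact h⟩
  loopless := ⟨fun x h => h.1 rfl⟩

/-- `I` is an ideal of the semigroup `S`. -/
def IsIdeal (I : Set S) : Prop := I.Nonempty ∧ ∀ x ∈ I, ∀ s : S, x * s ∈ I

/-- `p` is a prime ideal of the semigroup `S`. -/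
def IsPrimeIdeal (p : Set S) : Prop :=
  IsIdeal S p ∧ ∀ x y : S, (∀ s : S, x * s * y ∈ p) → x ∈ p ∨ y ∈ p

/-- `x` is nilpotent: `x ^ (n + 1) = 0` for some `n`. -/
def IsNil (x : S) : Prop := ∃ n : ℕ, (fun y => x * y)^[n] x = 0

/-- The annihilator of `a`. -/
def Ann (a : S) : Set S := {s | s * a = 0}

/-- The set of associated primes of `S`. -/
def Ass : Set (Set S) := {p | IsPrimeIdeal S p ∧ ∃ x : S, p = Ann S x}

/-! Fix `v` in a part `A`. An element of `Z(S)` kills `v` exactly when it lies outside `A`, so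
`Z(S) \ A` is the annihilator of `v`. If a multiple `x * s ≠ 0` of some `x ∈ A` were outside `A`, it
would kill `x`, hence square to zero, against reducedness; so `A ∪ {0}` is an ideal. Finally, if
neither `x` nor `y` kills `v`, then `v * x` and `v * y` both lie in `A`, so their product
`x * v * y * v` is nonzero: `x * v * y` does not kill `v`, and the annihilator is prime. -/

section

variable {S}

instance CommSemigroupWithZero.toCommSemigroup : CommSemigroup S where
  mul_comm := CommSemigroupWithZero.mul_comm

theorem mul_self_ne_zero_of_reduced (hred : ∀ x : S, IsNil S x → x = 0) {x : S}
    (hx : x ≠ 0) : x * x ≠ 0 :=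
  fun hxx => hx (hred x ⟨1, hxx⟩)

theorem mul_mem_zdivs {x : S} (hx : x ∈ zdivs S) (s : S) : x * s ∈ zdivs S := by
  obtain ⟨y, hy, hxy⟩ := hx
  exact ⟨y, hy, by rw [mul_right_comm, hxy, zero_mul]⟩

theorem isIdeal_Ann (v : S) : IsIdeal S (Ann S v) := by
  refine ⟨⟨0, zero_mul v⟩, fun x (hx : x * v = 0) s => ?_⟩
  change x * s * v = 0
  rw [mul_right_comm, hx, zero_mul]

theorem isPrimeIdeal_Ann {v : S}
    (hv : ∀ x y : S, v * x ≠ 0 → v * y ≠ 0 → v * x * (v * y) ≠ 0) :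
    IsPrimeIdeal S (Ann S v) := by
  refine ⟨isIdeal_Ann v, fun x y hxy => ?_⟩
  have hxvy : x * v * y * v = 0 := hxy v
  by_contra! ⟨hx, hy⟩
  refine hv x y (mul_comm x v ▸ hx) (mul_comm y v ▸ hy) ?_
  rw [mul_comm v x, mul_comm v y, ← mul_assoc, hxvy]

/-- A part of `Γ(S)` regarded as a complete multipartite graph: a set of vertices each of which is
adjacent to exactly the vertices outside the set. This isolates what a single part satisfies,
without reference to the other parts; `A` may be empty. -/
structure IsCompletePart (A : Set S) : Prop where
  subset_zdVerts : A ⊆ zdVerts S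
  mul_eq_zero_iff_of_ne :
    ∀ ⦃x z : S⦄, x ∈ A → z ∈ zdVerts S → z ≠ x → (z * x = 0 ↔ z ∉ A)

namespace IsCompletePart

theorem of_iUnion_eq_zdVerts {ι : Type*} {V : ι → Set S}
    (hdisj : Pairwise fun i j => Disjoint (V i) (V j))
    (hcover : (⋃ i, V i) = zdVerts S)
    (hadj : ∀ x y : S, x ∈ zdVerts S → y ∈ zdVerts S → x ≠ y →
      (x * y = 0 ↔ ¬ ∃ i, x ∈ V i ∧ y ∈ V i))
    (t : ι) : IsCompletePart (V t) := by
  have hsub : V t ⊆ zdVerts S := hcover ▸ Set.subset_iUnion V t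
  refine ⟨hsub, fun x z hx hz hzx => ?_⟩
  rw [hadj z x hz (hsub hx) hzx, not_iff_not]
  refine ⟨fun ⟨i, hzi, hxi⟩ => ?_, fun hzt => ⟨t, hzt, hx⟩⟩
  obtain rfl : i = t := hdisj.eq (Set.not_disjoint_iff.2 ⟨x, hxi, hx⟩)
  exact hzi

variable {A : Set S} {v x y z : S}

theorem mul_eq_zero_iff (hA : IsCompletePart A) (hred : ∀ x : S, IsNil S x → x = 0)
    (hx : x ∈ A) (hz : z ∈ zdVerts S) : z * x = 0 ↔ z ∉ A := by
  obtain rfl | hzx := eq_or_ne z x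
  · exact iff_of_false (mul_self_ne_zero_of_reduced hred hz.1) (not_not_intro hx)
  · exact hA.mul_eq_zero_iff_of_ne hx hz hzx

theorem mul_ne_zero (hA : IsCompletePart A) (hred : ∀ x : S, IsNil S x → x = 0)
    (hx : x ∈ A) (hy : y ∈ A) : x * y ≠ 0 :=
  fun h => (hA.mul_eq_zero_iff hred hy (hA.subset_zdVerts hx)).1 h hx

theorem mul_mem (hA : IsCompletePart A) (hred : ∀ x : S, IsNil S x → x = 0)
    (hx : x ∈ A) {s : S} (hxs : x * s ≠ 0) : x * s ∈ A := by
  have hvert : x * s ∈ zdVerts S := ⟨hxs, mul_mem_zdivs (hA.subset_zdVerts hx).2 s⟩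
  by_contra hmem
  have hkill : x * s * x = 0 := (hA.mul_eq_zero_iff hred hx hvert).2 hmem
  exact mul_self_ne_zero_of_reduced hred hxs (by rw [← mul_assoc, hkill, zero_mul])

theorem isIdeal_union_zero (hA : IsCompletePart A) (hred : ∀ x : S, IsNil S x → x = 0) :
    IsIdeal S (A ∪ {0}) := by
  refine ⟨⟨0, Or.inr rfl⟩, ?_⟩
  rintro x (hx | rfl) s
  · exact (eq_or_ne (x * s) 0).symm.imp (hA.mul_mem hred hx) id
  · exact Or.inr (zero_mul s)

theorem zdivs_diff_eq_Ann (hA : IsCompletePart A) (hred : ∀ x : S, IsNil S x → x = 0)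
    (hv : v ∈ A) : zdivs S \ A = Ann S v := by
  ext z
  constructor
  · rintro ⟨hz, hzA⟩
    obtain rfl | hz0 := eq_or_ne z 0
    · exact zero_mul v
    · exact (hA.mul_eq_zero_iff hred hv ⟨hz0, hz⟩).2 hzA
  · intro (hzv : z * v = 0)
    exact ⟨⟨v, (hA.subset_zdVerts hv).1, hzv⟩, fun hzA => hA.mul_ne_zero hred hzA hv hzv⟩

theorem isPrimeIdeal_zdivs_diff (hA : IsCompletePart A) (hred : ∀ x : S, IsNil S x → x = 0)
    (hne : A.Nonempty) : IsPrimeIdeal S (zdivs S \ A) := by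
  obtain ⟨v, hv⟩ := hne
  rw [hA.zdivs_diff_eq_Ann hred hv]
  exact isPrimeIdeal_Ann fun x y hx hy =>
    hA.mul_ne_zero hred (hA.mul_mem hred hv hx) (hA.mul_mem hred hv hy)

end IsCompletePart

theorem complete_r_partite_parts_ideal_prime_general
    (hred : ∀ x : S, IsNil S x → x = 0)
    {ι : Type*} (V : ι → Set S)
    (hne : ∀ i, (V i).Nonempty)
    (hdisj : Pairwise fun i j => Disjoint (V i) (V j))
    (hcover : (⋃ i, V i) = zdVerts S)
    (hadj : ∀ x y : S, x ∈ zdVerts S → y ∈ zdVerts S → x ≠ y →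
      (x * y = 0 ↔ ¬ ∃ i, x ∈ V i ∧ y ∈ V i))
    (t : ι) :
    IsIdeal S (V t ∪ {0}) ∧ IsPrimeIdeal S (zdivs S \ V t) :=
  have hpart : IsCompletePart (V t) := .of_iUnion_eq_zdVerts hdisj hcover hadj t
  ⟨hpart.isIdeal_union_zero hred, hpart.isPrimeIdeal_zdivs_diff hred (hne t)⟩

end

/-- If `S` is reduced and `Γ(S)` is a complete `r`-partite graph
with parts `V₁, …, V_r`, then for every `t`, `V_t ∪ {0}` is an ideal of `S` and
`p_t = Z(S) \ V_t` is a prime ideal of `S`. -/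
theorem complete_r_partite_parts_ideal_prime
    (hred : ∀ x : S, IsNil S x → x = 0)
    (r : ℕ) (hr : 1 ≤ r) (V : Fin r → Set S)
    (hne : ∀ i, (V i).Nonempty)
    (hdisj : Pairwise fun i j => Disjoint (V i) (V j))
    (hcover : (⋃ i, V i) = zdVerts S)
    (hadj : ∀ x y : S, x ∈ zdVerts S → y ∈ zdVerts S → x ≠ y →
      (x * y = 0 ↔ ¬ ∃ i, x ∈ V i ∧ y ∈ V i))
    (t : Fin r) :
    IsIdeal S (V t ∪ {0}) ∧ IsPrimeIdeal S (zdivs S \ V t) := by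
  exact complete_r_partite_parts_ideal_prime_general hred V hne hdisj hcover hadj t
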